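/- The restriction of 𝒲([2]) to symmetric functions is the cut-and-join operator: for every polynomial F in p₁, p₂, … and every N ≥ 1, (1/2)·Σ_{a,b=1}^N :D_{ab}D_{ba}:(F(p(X))) = ((1/2)·Σ_{a,b≥1} [(a+b)·p_a p_b·∂/∂p_{a+b} + a·b·p_{a+b}·∂²/(∂p_a∂p_b)] F)(p(X)). -/

import Mathlib

open scoped Classical
open MvPolynomial

/-- The polynomial ring `ℚ[X_{ij} : 1 ≤ i,j ≤ N]` in the entries of an `N×N` matrix of
independent variables. -/
abbrev RN (N : ℕ) : Type := MvPolynomial (Fin N × Fin N) ℚ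

/-- The `N×N` matrix `X` of independent variables. -/
noncomputable def XM (N : ℕ) : Matrix (Fin N) (Fin N) (RN N) :=
  Matrix.of fun i j => MvPolynomial.X (i, j)

/-- The power sums `p_k = tr X^k`. -/
noncomputable def pSub (N : ℕ) (k : ℕ+) : RN N := Matrix.trace ((XM N) ^ (k : ℕ))

/-- Substitution `F ↦ F(p(X))` of `p_k = tr X^k` into a polynomial in `p₁, p₂, …`
(the variable of index `k : ℕ+` is `p_k`). -/
noncomputable def psubst (N : ℕ) : MvPolynomial ℕ+ ℚ →ₐ[ℚ] RN N :=
  MvPolynomial.aeval (pSub N)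

/-- The operator `D_{ab} = Σ_{e=1}^N X_{ae} ∂/∂X_{be}`. -/
noncomputable def DN (N : ℕ) (a b : Fin N) (P : RN N) : RN N :=
  ∑ e : Fin N, MvPolynomial.X (a, e) * MvPolynomial.pderiv (b, e) P

/-- The normally ordered operator
`:D_{a₁b₁}⋯D_{a_nb_n}: = Σ_{e₁,…,e_n=1}^N X_{a₁e₁}⋯X_{a_ne_n} ∂ⁿ/(∂X_{b₁e₁}⋯∂X_{b_ne_n})`. -/
noncomputable def NOpN (N : ℕ) {n : ℕ} (a b : Fin n → Fin N) (P : RN N) : RN N :=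
  ∑ e : Fin n → Fin N,
    (∏ i, MvPolynomial.X (a i, e i)) *
      (List.ofFn (fun i => ((b i, e i) : Fin N × Fin N))).foldr
        (fun v G => MvPolynomial.pderiv v G) P

/-- The full cycle type of a permutation of `Fin n`, including fixed points
(i.e. rows of length 1). -/
noncomputable def fullCycleType {n : ℕ} (g : Equiv.Perm (Fin n)) : Multiset ℕ :=
  g.cycleType + Multiset.replicate (n - g.cycleType.sum) 1

/-- `κ(Δ) = (∏_k m_k! k^{m_k})⁻¹` where `m_k` is the number of rows of length `k`. -/
noncomputable def kappa (parts : Multiset ℕ) : ℚ :=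
  (∏ k ∈ parts.toFinset, (((parts.count k).factorial : ℚ) * (k : ℚ) ^ (parts.count k)))⁻¹

/-- The operator `𝒲_N(Δ) = κ(Δ) Σ_{a₁,…,a_n=1}^N :D_{a₁a_{g(1)}}⋯D_{a_na_{g(n)}}:`
computed from a permutation `g` of cycle type `Δ`. -/
noncomputable def WN (N : ℕ) {n : ℕ} (Δ : Nat.Partition n) (g : Equiv.Perm (Fin n))
    (P : RN N) : RN N :=
  kappa Δ.parts • ∑ a : Fin n → Fin N, NOpN N a (fun i => a (g i)) P

/-!
The chain rule for a second-order operator `L = ∑ᵢ cᵢ ∂ᵢ∂ᵢ'` reads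
`L(F(p)) = ∑ₖ (∂ₖF)(p) · L(pₖ) + ∑ⱼₖ (∂ⱼ∂ₖF)(p) · Γ(pⱼ, pₖ)`, where `Γ(P, Q) = ∑ᵢ cᵢ ∂ᵢP ∂ᵢ'Q`.
For `L = ∑_{a,b} :D_{ab}D_{ba}:` and `pₖ = tr Xᵏ`, we have `∂pₖ/∂X_{be} = k (Xᵏ⁻¹)_{eb}`.
Differentiating once more splits the product of matrices into two, which close up to two traces:
`L(pₖ) = k ∑_{a+b=k} pₐ p_b`, the cut term. In `Γ(pⱼ, pₖ)` the two factors close up to a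
single trace, `j k p_{j+k}`, the join term.
-/

section Derivation

variable {R A n : Type*} [CommSemiring R] [CommSemiring A] [Algebra R A] [Fintype n]

theorem matrix_map_derivation_mul {l m : Type*} (D : Derivation R A A) (M : Matrix l n A)
    (N : Matrix n m A) :
    (M * N).map D = M.map D * N + M * N.map D := by
  ext i j
  simp only [Matrix.map_apply, Matrix.mul_apply, Matrix.add_apply, map_sum, Derivation.leibniz,
    smul_eq_mul, ← Finset.sum_add_distrib]
  exact Finset.sum_congr rfl fun k _ => by ring

theorem matrix_map_derivation_pow [DecidableEq n] (D : Derivation R A A) (M : Matrix n n A)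
    (m : ℕ) :
    (M ^ m).map D = ∑ t ∈ Finset.range m, M ^ t * M.map D * M ^ (m - 1 - t) := by
  induction m with
  | zero =>
    ext i j
    simp [Matrix.one_apply, apply_ite D]
  | succ m ih =>
    rw [pow_succ, matrix_map_derivation_mul, ih, Finset.sum_range_succ, Finset.sum_mul]
    congr 1
    · refine Finset.sum_congr rfl fun t ht => ?_
      have hexp : m + 1 - 1 - t = m - 1 - t + 1 := by grind
      rw [hexp, pow_succ, ← mul_assoc]
    · simp

theorem derivation_trace_pow [DecidableEq n] (D : Derivation R A A) (M : Matrix n n A) (m : ℕ) :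
    D (M ^ m).trace = m * (M ^ (m - 1) * M.map D).trace := by
  have hterm (t) (ht : t ∈ Finset.range m) :
      (M ^ t * M.map D * M ^ (m - 1 - t)).trace = (M ^ (m - 1) * M.map D).trace := by
    have hexp : m - 1 - t + t = m - 1 := by grind
    rw [Matrix.trace_mul_comm, ← mul_assoc, ← pow_add, hexp]
  calc D (M ^ m).trace = ((M ^ m).map D).trace := by simp [Matrix.trace]
    _ = m * (M ^ (m - 1) * M.map D).trace := by
      rw [matrix_map_derivation_pow, Matrix.trace_sum, Finset.sum_congr rfl hterm, Finset.sum_const,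
        Finset.card_range, nsmul_eq_mul]

end Derivation

section ChainRule

variable {R A σ : Type*} [CommSemiring R] [CommSemiring A] [Algebra R A]

theorem vars_pderiv_subset (k : σ) (F : MvPolynomial σ R) : (pderiv k F).vars ⊆ F.vars := by
  intro i hi
  obtain ⟨d, hd, hid⟩ := (mem_vars_iff_mem_support i).mp hi
  rw [mem_support_iff, coeff_pderiv] at hd
  exact (mem_vars_iff_mem_support i).mpr
    ⟨d + Finsupp.single k 1, mem_support_iff.mpr (left_ne_zero_of_mul hd), by
      simp only [Finsupp.mem_support_iff, Finsupp.add_apply] at hid ⊢; lia⟩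

theorem derivation_aeval {M : Type*} [AddCommMonoid M] [Module R M] [Module A M]
    (D : Derivation R A M) (f : σ → A) {F : MvPolynomial σ R} {T : Finset σ} (hF : F.vars ⊆ T) :
    D (aeval f F) = ∑ k ∈ T, aeval f (pderiv k F) • D (f k) := by
  replace hF : F ∈ Algebra.adjoin R (X '' (T : Set σ)) := mem_supported.mpr (mod_cast hF)
  induction hF using Algebra.adjoin_induction with
  | mem x hx =>
    obtain ⟨k, hk, rfl⟩ := hx
    simp [pderiv_X, Pi.single_apply, Finset.mem_coe.mp hk, apply_ite]
  | algebraMap r => simp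
  | add x y _ _ hx hy => simp only [map_add, hx, hy, add_smul, Finset.sum_add_distrib]
  | mul x y _ _ hx hy =>
    simp only [map_mul, Derivation.leibniz, smul_eq_mul, hx, hy, map_add, add_smul, mul_smul,
      Finset.smul_sum, Finset.sum_add_distrib]

theorem derivation_derivation_aeval (D D' : Derivation R A A) (f : σ → A)
    {F : MvPolynomial σ R} {T : Finset σ} (hF : F.vars ⊆ T) :
    D (D' (aeval f F)) =
      ∑ k ∈ T, aeval f (pderiv k F) * D (D' (f k)) +
      ∑ x ∈ T ×ˢ T, aeval f (pderiv x.1 (pderiv x.2 F)) * (D (f x.1) * D' (f x.2)) := by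
  rw [derivation_aeval D' f hF, map_sum, Finset.sum_product_right, ← Finset.sum_add_distrib]
  refine Finset.sum_congr rfl fun k _ => ?_
  rw [smul_eq_mul, Derivation.leibniz,
    derivation_aeval D f ((vars_pderiv_subset k F).trans hF), Finset.smul_sum]
  simp only [smul_eq_mul]
  congr 1
  exact Finset.sum_congr rfl fun j _ => by ring

theorem sum_mul_derivation_derivation_aeval {ι : Type*} [Fintype ι] (c : ι → A)
    (D D' : ι → Derivation R A A) (f : σ → A)
    {F : MvPolynomial σ R} {T : Finset σ} (hF : F.vars ⊆ T) :
    ∑ i, c i * D i (D' i (aeval f F)) =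
      ∑ k ∈ T, aeval f (pderiv k F) * ∑ i, c i * D i (D' i (f k)) +
      ∑ x ∈ T ×ˢ T, aeval f (pderiv x.1 (pderiv x.2 F)) *
        ∑ i, c i * (D i (f x.1) * D' i (f x.2)) := by
  simp only [derivation_derivation_aeval _ _ f hF, mul_add, Finset.mul_sum,
    Finset.sum_add_distrib]
  rw [Finset.sum_comm (t := T), Finset.sum_comm (t := T ×ˢ T)]
  simp only [mul_left_comm]

end ChainRule

section Trace

variable {A m n p q : Type*} [CommSemiring A] [Fintype m] [Fintype n] [Fintype p] [Fintype q]

theorem sum_mul_eq_trace_mul_trace (M : Matrix m n A) (N : Matrix p q A) (P : Matrix q p A)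
    (Q : Matrix n m A) :
    ∑ a, ∑ b, ∑ e, ∑ f, M a e * N b f * (P f b * Q e a) = (N * P).trace * (M * Q).trace := by
  simp only [Matrix.trace, Matrix.diag_apply, Matrix.mul_apply, Finset.sum_mul_sum]
  rw [Finset.sum_comm]
  refine Finset.sum_congr rfl fun b _ => Finset.sum_congr rfl fun a _ => ?_
  rw [Finset.sum_comm]
  exact Finset.sum_congr rfl fun f _ => Finset.sum_congr rfl fun e _ => by ring

theorem sum_mul_eq_trace_mul (M : Matrix m n A) (N : Matrix p q A) (P : Matrix n p A)
    (Q : Matrix q m A) :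
    ∑ a, ∑ b, ∑ e, ∑ f, M a e * N b f * (P e b * Q f a) = (M * P * (N * Q)).trace := by
  simp only [Matrix.trace, Matrix.diag_apply, Matrix.mul_apply (M := M * P), Matrix.mul_apply,
    Finset.sum_mul_sum]
  exact Finset.sum_congr rfl fun a _ => Finset.sum_congr rfl fun b _ =>
    Finset.sum_congr rfl fun e _ => Finset.sum_congr rfl fun f _ => by ring

end Trace

section GenericMatrix

open Matrix

variable {R n : Type*} [CommSemiring R] [DecidableEq n]

theorem mvPolynomialX_map_pderiv (b e : n) :
    (mvPolynomialX n n R).map (pderiv (b, e)) = Matrix.single b e 1 := by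
  ext i j
  simp [pderiv_X, Pi.single_apply, Matrix.single_apply, eq_comm]

variable [Fintype n]

theorem pderiv_mvPolynomialX_pow_apply (b e i j : n) (m : ℕ) :
    pderiv (b, e) ((mvPolynomialX n n R ^ m) i j) = ∑ t ∈ Finset.range m,
      (mvPolynomialX n n R ^ t) i b * (mvPolynomialX n n R ^ (m - 1 - t)) e j := by
  have := congr_fun₂ (matrix_map_derivation_pow (pderiv (b, e)) (mvPolynomialX n n R) m) i j
  simpa [mvPolynomialX_map_pderiv, Matrix.sum_apply, Matrix.mul_apply, Matrix.single_apply,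
    ite_and] using this

theorem pderiv_trace_mvPolynomialX_pow (b e : n) (m : ℕ) :
    pderiv (b, e) (mvPolynomialX n n R ^ m).trace = m * (mvPolynomialX n n R ^ (m - 1)) e b := by
  simp [derivation_trace_pow, mvPolynomialX_map_pderiv, Matrix.trace_mul_single]

theorem pderiv_pderiv_trace_mvPolynomialX_pow (b e a f : n) (m : ℕ) :
    pderiv (b, e) (pderiv (a, f) (mvPolynomialX n n R ^ m).trace) =
      m * ∑ t ∈ Finset.range (m - 1),
        (mvPolynomialX n n R ^ t) f b * (mvPolynomialX n n R ^ (m - 2 - t)) e a := by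
  rw [pderiv_trace_mvPolynomialX_pow, ← nsmul_eq_mul, map_nsmul, pderiv_mvPolynomialX_pow_apply,
    nsmul_eq_mul, Nat.sub_sub]

end GenericMatrix

section Casimir

open Matrix

variable {R n : Type*} [CommSemiring R] [Fintype n]

/-- The operator `∑_{a,b} :D_{ab}D_{ba}:`, the normally ordered quadratic Casimir of `gl_n`, acting
on polynomials in the entries of a square matrix. The indices `e, f` are the `e₁, e₂` of `NOpN`. -/
noncomputable def normalCasimir (P : MvPolynomial (n × n) R) : MvPolynomial (n × n) R :=
  ∑ a, ∑ b, ∑ e, ∑ f, X (a, e) * X (b, f) * pderiv (b, e) (pderiv (a, f) P)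

/-- The bilinear symbol of `normalCasimir`, which measures its failure to be a derivation: each
second derivative `∂∂'` is replaced by `∂` acting on the first argument times `∂'` acting on the
second. -/
noncomputable def normalCasimirSymbol (P Q : MvPolynomial (n × n) R) : MvPolynomial (n × n) R :=
  ∑ a, ∑ b, ∑ e, ∑ f, X (a, e) * X (b, f) * (pderiv (b, e) P * pderiv (a, f) Q)

theorem normalCasimir_aeval {σ : Type*} (f : σ → MvPolynomial (n × n) R) {F : MvPolynomial σ R}
    {T : Finset σ} (hF : F.vars ⊆ T) :
    normalCasimir (aeval f F) = ∑ k ∈ T, aeval f (pderiv k F) * normalCasimir (f k) +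
      ∑ x ∈ T ×ˢ T, aeval f (pderiv x.1 (pderiv x.2 F)) * normalCasimirSymbol (f x.1) (f x.2) := by
  simpa only [normalCasimir, normalCasimirSymbol, Fintype.sum_prod_type] using
    sum_mul_derivation_derivation_aeval
      (fun i : n × n × n × n => X (i.1, i.2.2.1) * X (i.2.1, i.2.2.2))
      (fun i => pderiv (i.2.1, i.2.2.1)) (fun i => pderiv (i.1, i.2.2.2)) f hF

variable [DecidableEq n]

theorem normalCasimir_trace_pow (m : ℕ) :
    normalCasimir (mvPolynomialX n n R ^ m).trace = m * ∑ t ∈ Finset.range (m - 1),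
      (mvPolynomialX n n R ^ (t + 1)).trace * (mvPolynomialX n n R ^ (m - 1 - t)).trace := by
  have hterm (t) (ht : t ∈ Finset.range (m - 1)) :
      (mvPolynomialX n n R ^ (t + 1)).trace * (mvPolynomialX n n R ^ (m - 1 - t)).trace =
        ∑ a, ∑ b, ∑ e, ∑ f, X (a, e) * X (b, f) *
          ((mvPolynomialX n n R ^ t) f b * (mvPolynomialX n n R ^ (m - 2 - t)) e a) := by
    have hexp : m - 1 - t = m - 2 - t + 1 := by grind
    rw [hexp, pow_succ', pow_succ', ← sum_mul_eq_trace_mul_trace]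
    rfl
  rw [Finset.sum_congr rfl hterm]
  simp only [normalCasimir, pderiv_pderiv_trace_mvPolynomialX_pow, Finset.mul_sum,
    Finset.sum_comm (s := Finset.range (m - 1)), mul_left_comm]

theorem normalCasimirSymbol_trace_pow {j k : ℕ} (hj : j ≠ 0) (hk : k ≠ 0) :
    normalCasimirSymbol (mvPolynomialX n n R ^ j).trace (mvPolynomialX n n R ^ k).trace =
      j * k * (mvPolynomialX n n R ^ (j + k)).trace := by
  have htrace : (mvPolynomialX n n R ^ (j + k)).trace = ∑ a, ∑ b, ∑ e, ∑ f,
      X (a, e) * X (b, f) *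
        ((mvPolynomialX n n R ^ (j - 1)) e b * (mvPolynomialX n n R ^ (k - 1)) f a) := by
    rw [pow_add, ← mul_pow_sub_one hj, ← mul_pow_sub_one hk, ← sum_mul_eq_trace_mul]
    rfl
  simp only [htrace, normalCasimirSymbol, pderiv_trace_mvPolynomialX_pow, Finset.mul_sum]
  exact Finset.sum_congr rfl fun a _ => Finset.sum_congr rfl fun b _ =>
    Finset.sum_congr rfl fun e _ => Finset.sum_congr rfl fun f _ => by ring

end Casimir

section PNatSums

theorem finsum_finsum_eq_sum_product {α β M : Type*} [AddCommMonoid M] {g : α → β → M}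
    {S : Finset α} {T : Finset β} (h : ∀ a b, g a b ≠ 0 → a ∈ S ∧ b ∈ T) :
    ∑ᶠ a, ∑ᶠ b, g a b = ∑ x ∈ S ×ˢ T, g x.1 x.2 := by
  have hsupp : Function.support (fun x : α × β => g x.1 x.2) ⊆ (S ×ˢ T : Finset (α × β)) :=
    fun x hx => Finset.mem_coe.mpr (Finset.mem_product.mpr (h x.1 x.2 hx))
  rw [← finsum_eq_sum_of_support_subset _ hsupp,
    finsum_curry _ ((S ×ˢ T).finite_toSet.subset hsupp)]

theorem sum_filter_add_eq_sum_range {M : Type*} [AddCommMonoid M] (g : ℕ → ℕ → M) {k m : ℕ+}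
    (hk : k ≤ m) :
    ∑ x ∈ Finset.Iic m ×ˢ Finset.Iic m with x.1 + x.2 = k, g x.1 x.2 =
      ∑ t ∈ Finset.range (k - 1), g (t + 1) (k - 1 - t) := by
  refine Finset.sum_nbij (fun x => x.1.natPred) ?_ ?_ ?_ ?_
  · rintro ⟨a, b⟩ h
    simp only [Finset.mem_filter] at h
    have hsum : (a : ℕ) + b = k := congr_arg PNat.val h.2
    have hpred : a.natPred + 1 = a := a.natPred_add_one
    have hpos : 0 < (b : ℕ) := b.pos
    rw [Finset.mem_range]
    lia
  · rintro ⟨a, b⟩ h ⟨c, d⟩ h' hac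
    simp only [Finset.coe_filter, Set.mem_ofPred_eq] at h h'
    obtain rfl : a = c := PNat.natPred_injective hac
    rw [add_left_cancel (h.2.trans h'.2.symm)]
  · intro t ht
    have hlt : t.succPNat < k := by
      rw [← PNat.coe_lt_coe, Nat.succPNat_coe]
      grind
    have hadd : t.succPNat + (k - t.succPNat) = k := PNat.add_sub_of_lt hlt
    have hle : k - t.succPNat ≤ k := (PNat.lt_add_left _ _).le.trans hadd.le
    exact ⟨(t.succPNat, k - t.succPNat), by
      simpa [hadd] using ⟨hlt.le.trans hk, hle.trans hk⟩, Nat.natPred_succPNat t⟩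
  · rintro ⟨a, b⟩ h
    simp only [Finset.mem_filter] at h
    have hsum : (a : ℕ) + b = k := congr_arg PNat.val h.2
    have hpred : a.natPred + 1 = a := a.natPred_add_one
    congr 1 <;> lia

end PNatSums

section CutAndJoin

open Matrix

variable {R : Type*} [CommSemiring R]

/-- The substitution of the power sums `p_k = tr X^k` of a generic square matrix `X` into a
polynomial in `p₁, p₂, …`, over any commutative semiring; `psubst N` is the case
`n = Fin N`, `R = ℚ`. -/
noncomputable def powerSumSubst (n R : Type*) [CommSemiring R] [Fintype n] [DecidableEq n] :
    MvPolynomial ℕ+ R →ₐ[R] MvPolynomial (n × n) R :=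
  aeval fun k => (mvPolynomialX n n R ^ (k : ℕ)).trace

/-- The cut operator `∑_{a,b} (a+b) p_a p_b ∂/∂p_{a+b}`, without the customary factor `1/2` so that
it makes sense over any commutative semiring. The sum over `a, b` is finite on each `F`, since `F`
involves finitely many variables. -/
noncomputable def cutOp (F : MvPolynomial ℕ+ R) : MvPolynomial ℕ+ R :=
  ∑ᶠ a : ℕ+, ∑ᶠ b : ℕ+, (((a : ℕ) : R) + ((b : ℕ) : R)) • (X a * X b * pderiv (a + b) F)

/-- The join operator `∑_{a,b} a b p_{a+b} ∂²/∂p_a∂p_b`, normalized like `cutOp`. -/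
noncomputable def joinOp (F : MvPolynomial ℕ+ R) : MvPolynomial ℕ+ R :=
  ∑ᶠ a : ℕ+, ∑ᶠ b : ℕ+, (((a : ℕ) : R) * ((b : ℕ) : R)) • (X (a + b) * pderiv a (pderiv b F))

theorem cutOp_eq_sum {F : MvPolynomial ℕ+ R} {m : ℕ+} (hF : F.vars ⊆ Finset.Iic m) :
    cutOp F = ∑ x ∈ Finset.Iic m ×ˢ Finset.Iic m,
      (((x.1 : ℕ) : R) + ((x.2 : ℕ) : R)) • (X x.1 * X x.2 * pderiv (x.1 + x.2) F) := by
  refine finsum_finsum_eq_sum_product fun a b hab => ?_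
  have hmem : a + b ∈ F.vars := by
    contrapose! hab
    rw [pderiv_eq_zero_of_notMem_vars hab, mul_zero, smul_zero]
  have hle : a + b ≤ m := Finset.mem_Iic.mp (hF hmem)
  exact ⟨Finset.mem_Iic.mpr ((PNat.lt_add_right a b).le.trans hle),
    Finset.mem_Iic.mpr ((PNat.lt_add_left b a).le.trans hle)⟩

theorem joinOp_eq_sum {F : MvPolynomial ℕ+ R} {T : Finset ℕ+} (hF : F.vars ⊆ T) :
    joinOp F = ∑ x ∈ T ×ˢ T,
      (((x.1 : ℕ) : R) * ((x.2 : ℕ) : R)) • (X (x.1 + x.2) * pderiv x.1 (pderiv x.2 F)) := by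
  refine finsum_finsum_eq_sum_product fun a b hab => ⟨?_, ?_⟩ <;> contrapose! hab
  · have ha : a ∉ (pderiv b F).vars := fun h => hab (hF (vars_pderiv_subset b F h))
    rw [pderiv_eq_zero_of_notMem_vars ha, mul_zero, smul_zero]
  · rw [pderiv_eq_zero_of_notMem_vars fun h => hab (hF h), map_zero, mul_zero, smul_zero]

variable {n : Type*} [Fintype n] [DecidableEq n]

theorem powerSumSubst_X (k : ℕ+) :
    powerSumSubst n R (X k) = (mvPolynomialX n n R ^ (k : ℕ)).trace :=
  aeval_X _ k

theorem normalCasimir_powerSumSubst_X {k m : ℕ+} (hk : k ≤ m) :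
    normalCasimir (powerSumSubst n R (X k)) =
      ∑ x ∈ Finset.Iic m ×ˢ Finset.Iic m with x.1 + x.2 = k,
        (k : ℕ) * (powerSumSubst n R (X x.1) * powerSumSubst n R (X x.2)) := by
  simp only [powerSumSubst_X]
  rw [normalCasimir_trace_pow, ← Finset.mul_sum, sum_filter_add_eq_sum_range
    (fun i j => (mvPolynomialX n n R ^ i).trace * (mvPolynomialX n n R ^ j).trace) hk]

theorem normalCasimirSymbol_powerSumSubst_X (j k : ℕ+) :
    normalCasimirSymbol (powerSumSubst n R (X j)) (powerSumSubst n R (X k)) =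
      (j : ℕ) * (k : ℕ) * powerSumSubst n R (X (j + k)) := by
  simp only [powerSumSubst_X, normalCasimirSymbol_trace_pow j.ne_zero k.ne_zero, PNat.add_coe]

theorem powerSumSubst_cutOp {F : MvPolynomial ℕ+ R} {m : ℕ+} (hF : F.vars ⊆ Finset.Iic m) :
    powerSumSubst n R (cutOp F) = ∑ k ∈ Finset.Iic m,
      powerSumSubst n R (pderiv k F) * normalCasimir (powerSumSubst n R (X k)) := by
  calc powerSumSubst n R (cutOp F)
      = ∑ x ∈ Finset.Iic m ×ˢ Finset.Iic m, ∑ k ∈ Finset.Iic m, if x.1 + x.2 = k then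
          powerSumSubst n R (pderiv k F) *
            ((k : ℕ) * (powerSumSubst n R (X x.1) * powerSumSubst n R (X x.2))) else 0 := by
        rw [cutOp_eq_sum hF, map_sum]
        refine Finset.sum_congr rfl fun x _ => ?_
        rw [Finset.sum_ite_eq]
        split_ifs with hx
        · simp only [Algebra.smul_def, map_mul, map_add, map_natCast, PNat.add_coe, Nat.cast_add]
          ring
        · rw [pderiv_eq_zero_of_notMem_vars fun h => hx (hF h), mul_zero, smul_zero, map_zero]
    _ = ∑ k ∈ Finset.Iic m, powerSumSubst n R (pderiv k F) *
          ∑ x ∈ Finset.Iic m ×ˢ Finset.Iic m with x.1 + x.2 = k,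
            (k : ℕ) * (powerSumSubst n R (X x.1) * powerSumSubst n R (X x.2)) := by
        rw [Finset.sum_comm]
        simp only [Finset.mul_sum, Finset.sum_filter, mul_ite, mul_zero]
    _ = _ := Finset.sum_congr rfl fun k hk => by
        rw [normalCasimir_powerSumSubst_X (Finset.mem_Iic.mp hk)]

theorem powerSumSubst_joinOp {F : MvPolynomial ℕ+ R} {T : Finset ℕ+} (hF : F.vars ⊆ T) :
    powerSumSubst n R (joinOp F) = ∑ x ∈ T ×ˢ T, powerSumSubst n R (pderiv x.1 (pderiv x.2 F)) *
      normalCasimirSymbol (powerSumSubst n R (X x.1)) (powerSumSubst n R (X x.2)) := by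
  rw [joinOp_eq_sum hF, map_sum]
  refine Finset.sum_congr rfl fun x _ => ?_
  simp only [normalCasimirSymbol_powerSumSubst_X, map_mul, Algebra.smul_def, map_natCast]
  ring

theorem W2_is_cut_and_join_general (F : MvPolynomial ℕ+ R) :
    normalCasimir (powerSumSubst n R F) = powerSumSubst n R (cutOp F + joinOp F) := by
  obtain ⟨m, hm⟩ := F.vars.exists_le
  have hF : F.vars ⊆ Finset.Iic m := fun k hk => Finset.mem_Iic.mpr (hm k hk)
  rw [map_add, powerSumSubst_cutOp hF, powerSumSubst_joinOp hF]
  simpa only [powerSumSubst, aeval_X] using normalCasimir_aeval _ hF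

end CutAndJoin

theorem NOpN_pair_swap (N : ℕ) (a b : Fin N) (P : RN N) :
    NOpN N ![a, b] ![b, a] P =
      ∑ e, ∑ f, X (a, e) * X (b, f) * pderiv (b, e) (pderiv (a, f) P) := by
  rw [NOpN, ← Fintype.sum_prod_type']
  refine Fintype.sum_equiv (finTwoArrowEquiv (Fin N)) _ _ fun e => ?_
  simp [List.ofFn_succ, Fin.prod_univ_two, finTwoArrowEquiv]

theorem W2_is_cut_and_join (N : ℕ) (hN : 1 ≤ N) (F : MvPolynomial ℕ+ ℚ) :
    (1/2 : ℚ) • ∑ a : Fin N, ∑ b : Fin N, NOpN N ![a, b] ![b, a] (psubst N F) =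
      psubst N ((1/2 : ℚ) •
        (∑ᶠ a : ℕ+, ∑ᶠ b : ℕ+,
            (((a : ℕ) : ℚ) + ((b : ℕ) : ℚ)) •
              (MvPolynomial.X a * MvPolynomial.X b * MvPolynomial.pderiv (a + b) F) +
         ∑ᶠ a : ℕ+, ∑ᶠ b : ℕ+,
            (((a : ℕ) : ℚ) * ((b : ℕ) : ℚ)) •
              (MvPolynomial.X (a + b) *
                MvPolynomial.pderiv a (MvPolynomial.pderiv b F)))) := by
  simp only [map_smul, NOpN_pair_swap]
  exact congr_arg _ (W2_is_cut_and_join_general F)
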